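/- Weakening holds for the real semantics: if Γ : e ⇓ᴿ_k Δ : v and b ∉ dom(Δ), then (Γ, b ↦ hv) : e ⇓ᴿ_k (Δ, b ↦ hv) : v. -/

import Mathlib

/-! ## Syntax of the fine-grain call-by-value lambda calculus with thunks -/

mutual
inductive Val : Type where
  | var : String → Val
  | ptr : Nat → Val
  | unit : Val
  | inl : Val → Val
  | inr : Val → Val
  | pair : Val → Val → Val
  | lam : String → Expr → Val

inductive HeapVal : Type where
  | fold : Val → HeapVal
  | memo : Val → HeapVal
  | lazy : String → Val → HeapVal

inductive Expr : Type where
  | ret : Val → Expr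
  | alloc : HeapVal → Expr
  | letE : String → Expr → Expr → Expr
  | caseE : Val → String → Expr → String → Expr → Expr
  | splitE : Val → String → String → Expr → Expr
  | app : Val → Val → Expr
  | unfoldE : Val → Expr
  | call : String → Val → Expr
  | force : Val → Expr
  | save : Nat → Val → Expr
  | spend : Nat → Val → Expr → Expr
  | pass : Val → Expr
end

/-! ## Capture-avoiding substitution (values substituted are closed) -/

mutual
def substV (v : Val) (x : String) : Val → Val
  | .var y => if y = x then v else .var y
  | .ptr a => .ptr a
  | .unit => .unit
  | .inl w => .inl (substV v x w)
  | .inr w => .inr (substV v x w)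
  | .pair w₁ w₂ => .pair (substV v x w₁) (substV v x w₂)
  | .lam y e => if y = x then .lam y e else .lam y (substE v x e)

def substH (v : Val) (x : String) : HeapVal → HeapVal
  | .fold w => .fold (substV v x w)
  | .memo w => .memo (substV v x w)
  | .lazy F w => .lazy F (substV v x w)

def substE (v : Val) (x : String) : Expr → Expr
  | .ret w => .ret (substV v x w)
  | .alloc hv => .alloc (substH v x hv)
  | .letE y e₁ e₂ => .letE y (substE v x e₁) (if y = x then e₂ else substE v x e₂)
  | .caseE w y₁ e₁ y₂ e₂ =>
      .caseE (substV v x w) y₁ (if y₁ = x then e₁ else substE v x e₁)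
        y₂ (if y₂ = x then e₂ else substE v x e₂)
  | .splitE w y₁ y₂ e =>
      .splitE (substV v x w) y₁ y₂ (if y₁ = x ∨ y₂ = x then e else substE v x e)
  | .app w₁ w₂ => .app (substV v x w₁) (substV v x w₂)
  | .unfoldE w => .unfoldE (substV v x w)
  | .call F w => .call F (substV v x w)
  | .force w => .force (substV v x w)
  | .save n w => .save n (substV v x w)
  | .spend n w e => .spend n (substV v x w) (substE v x e)
  | .pass w => .pass (substV v x w)
end

/-! ## Heaps: finite partial maps from pointers to (annotated) heap values -/

structure Heap (A : Type) : Type where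
  look : Nat → Option A
  fin : {a : Nat | look a ≠ none}.Finite

namespace Heap

def empty {A : Type} : Heap A := ⟨fun _ => none, by simp⟩

def upd {A : Type} (Γ : Heap A) (a : Nat) (v : A) : Heap A :=
  ⟨fun b => if b = a then some v else Γ.look b, by
    apply Set.Finite.subset (Γ.fin.insert a)
    intro b hb
    simp only [Set.mem_setOf_eq] at hb
    by_cases h : b = a
    · simp [h]
    · simp only [h, if_false] at hb
      exact Set.mem_insert_iff.mpr (Or.inr hb)⟩

def erase {A : Type} (Γ : Heap A) (a : Nat) : Heap A :=
  ⟨fun b => if b = a then none else Γ.look b, by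
    apply Set.Finite.subset Γ.fin
    intro b hb
    simp only [Set.mem_setOf_eq] at hb ⊢
    by_cases h : b = a
    · simp [h] at hb
    · simpa [h] using hb⟩

def eraseSet {A : Type} (Γ : Heap A) (D : Finset Nat) : Heap A :=
  ⟨fun b => if b ∈ D then none else Γ.look b, by
    apply Set.Finite.subset Γ.fin
    intro b hb
    simp only [Set.mem_setOf_eq] at hb ⊢
    by_cases h : b ∈ D
    · simp [h] at hb
    · simpa [h] using hb⟩

def map {A B : Type} (Γ : Heap A) (f : A → B) : Heap B :=
  ⟨fun b => (Γ.look b).map f, by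
    apply Set.Finite.subset Γ.fin
    intro b hb
    simp only [Set.mem_setOf_eq] at hb ⊢
    intro h
    rw [h] at hb
    simp at hb⟩

noncomputable def dom {A : Type} (Γ : Heap A) : Finset Nat := Γ.fin.toFinset

/-- Sum a numeric annotation over all cells of the heap. -/
noncomputable def total {A : Type} (Γ : Heap A) (f : A → ℕ) : ℕ :=
  ∑ a ∈ Γ.dom, (Γ.look a).elim 0 f

end Heap

/-! ## The real cost semantics ⇓ᴿ -/

/-- Environment of top-level (possibly recursive) function definitions. -/
abbrev FEnv := String → Option (String × Expr)

abbrev RHeap := Heap HeapVal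

/-- Big-step real semantics `Γ : e ⇓ᴿ_k Δ : v`.  Lambda applications and
function calls cost one step; `save`, `spend` and `pass` are no-ops. -/
inductive RBig (𝓕 : FEnv) : RHeap → Expr → Nat → RHeap → Val → Prop where
  | ret : ∀ Γ v, RBig 𝓕 Γ (.ret v) 0 Γ v
  | alloc : ∀ Γ a hv, Γ.look a = none →
      RBig 𝓕 Γ (.alloc hv) 0 (Γ.upd a hv) (.ptr a)
  | letE : ∀ Γ Δ Θ x e₁ e₂ k l v w,
      RBig 𝓕 Γ e₁ k Δ v → RBig 𝓕 Δ (substE v x e₂) l Θ w →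
      RBig 𝓕 Γ (.letE x e₁ e₂) (k + l) Θ w
  | caseL : ∀ Γ Δ v x₁ e₁ x₂ e₂ k w,
      RBig 𝓕 Γ (substE v x₁ e₁) k Δ w →
      RBig 𝓕 Γ (.caseE (.inl v) x₁ e₁ x₂ e₂) k Δ w
  | caseR : ∀ Γ Δ v x₁ e₁ x₂ e₂ k w,
      RBig 𝓕 Γ (substE v x₂ e₂) k Δ w →
      RBig 𝓕 Γ (.caseE (.inr v) x₁ e₁ x₂ e₂) k Δ w
  | splitE : ∀ Γ Δ v₁ v₂ x y e k w,
      RBig 𝓕 Γ (substE v₂ y (substE v₁ x e)) k Δ w →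
      RBig 𝓕 Γ (.splitE (.pair v₁ v₂) x y e) k Δ w
  | app : ∀ Γ Δ x e v k w,
      RBig 𝓕 Γ (substE v x e) k Δ w →
      RBig 𝓕 Γ (.app (.lam x e) v) (k + 1) Δ w
  | unfoldE : ∀ Γ a v, Γ.look a = some (.fold v) →
      RBig 𝓕 Γ (.unfoldE (.ptr a)) 0 Γ v
  | call : ∀ Γ Δ F x e v k w, 𝓕 F = some (x, e) →
      RBig 𝓕 Γ (substE v x e) k Δ w →
      RBig 𝓕 Γ (.call F v) (k + 1) Δ w
  | force : ∀ Γ Δ a F v k w, Γ.look a = some (.lazy F v) →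
      RBig 𝓕 (Γ.erase a) (.call F v) k Δ w →
      RBig 𝓕 Γ (.force (.ptr a)) k (Δ.upd a (.memo w)) w
  | recall : ∀ Γ a v, Γ.look a = some (.memo v) →
      RBig 𝓕 Γ (.force (.ptr a)) 0 Γ v
  | save : ∀ Γ m v, RBig 𝓕 Γ (.save m v) 0 Γ v
  | spend : ∀ Γ Δ m v e k w, RBig 𝓕 Γ e k Δ w →
      RBig 𝓕 Γ (.spend m v e) k Δ w
  | pass : ∀ Γ v, RBig 𝓕 Γ (.pass v) 0 Γ v

/-!
Evaluation never shrinks the domain of the heap, so a pointer `b` that is free in the final heap is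
free throughout the derivation: it differs from every allocated or forced pointer. The update at
`b` therefore commutes with all heap operations and preserves every lookup that succeeds.
-/

namespace Heap

variable {A : Type} {Γ Δ : Heap A} {a b : ℕ} {v w : A}

@[ext]
theorem ext (h : ∀ a, Γ.look a = Δ.look a) : Γ = Δ := by
  cases Γ
  cases Δ
  congr
  exact funext h

theorem look_upd (Γ : Heap A) (a b : ℕ) (v : A) :
    (Γ.upd a v).look b = if b = a then some v else Γ.look b := rfl

theorem look_erase (Γ : Heap A) (a b : ℕ) :
    (Γ.erase a).look b = if b = a then none else Γ.look b := rfl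

theorem look_upd_of_ne (h : b ≠ a) : (Γ.upd a v).look b = Γ.look b := if_neg h

theorem look_upd_eq_none_iff : (Γ.upd a v).look b = none ↔ b ≠ a ∧ Γ.look b = none := by
  by_cases h : b = a <;> simp [look_upd, h]

theorem look_upd_eq_some_of_look_eq_none (hb : Γ.look b = none) (ha : Γ.look a = some w) :
    (Γ.upd b v).look a = some w := by
  have hab : a ≠ b := by
    rintro rfl
    simp [hb] at ha
  rw [look_upd_of_ne hab, ha]

theorem upd_comm (Γ : Heap A) (hab : a ≠ b) (v w : A) :
    (Γ.upd a v).upd b w = (Γ.upd b w).upd a v := by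
  ext1 c
  simp only [look_upd]
  grind

theorem upd_erase_comm (Γ : Heap A) (hab : a ≠ b) (v : A) :
    (Γ.upd a v).erase b = (Γ.erase b).upd a v := by
  ext1 c
  simp only [look_upd, look_erase]
  grind

theorem mem_dom_iff : a ∈ Γ.dom ↔ Γ.look a ≠ none := by
  simp [dom]

theorem notMem_dom_iff : a ∉ Γ.dom ↔ Γ.look a = none := by
  rw [mem_dom_iff, not_not]

theorem dom_upd (Γ : Heap A) (a : ℕ) (v : A) : (Γ.upd a v).dom = insert a Γ.dom := by
  ext b
  by_cases h : b = a <;> simp [mem_dom_iff, look_upd, h]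

theorem dom_erase (Γ : Heap A) (a : ℕ) : (Γ.erase a).dom = Γ.dom.erase a := by
  ext b
  by_cases h : b = a <;> simp [mem_dom_iff, look_erase, h]

end Heap

namespace RBig

variable {𝓕 : FEnv} {Γ Δ : RHeap} {e : Expr} {k : ℕ} {v : Val} {b : ℕ}

theorem dom_subset (h : RBig 𝓕 Γ e k Δ v) : Γ.dom ⊆ Δ.dom := by
  induction h with
  | alloc Γ a hv =>
    rw [Heap.dom_upd]
    exact Finset.subset_insert a Γ.dom
  | letE _ _ _ _ _ _ _ _ _ _ _ _ ih₁ ih₂ => exact ih₁.trans ih₂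
  | force _ _ _ _ _ _ _ _ _ ih => rwa [Heap.dom_upd, Finset.subset_insert_iff, ← Heap.dom_erase]
  | caseL | caseR | splitE | app | call | spend => assumption
  | _ => rfl

theorem look_eq_none (h : RBig 𝓕 Γ e k Δ v) (hb : Δ.look b = none) : Γ.look b = none :=
  Heap.notMem_dom_iff.mp fun hmem => Heap.notMem_dom_iff.mpr hb (h.dom_subset hmem)

end RBig

/-- **Weakening for the real semantics** (Lemma `real-weakening`):
if `Γ : e ⇓ᴿ_k Δ : v` and `b ∉ dom(Δ)`, then
`(Γ, b ↦ hv) : e ⇓ᴿ_k (Δ, b ↦ hv) : v`. -/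
theorem real_weakening (𝓕 : FEnv) (Γ Δ : RHeap) (e : Expr) (k : ℕ) (v : Val)
    (b : ℕ) (hv : HeapVal)
    (h : RBig 𝓕 Γ e k Δ v) (hb : Δ.look b = none) :
    RBig 𝓕 (Γ.upd b hv) e k (Δ.upd b hv) v := by
  induction h with
  | ret | save | pass => constructor
  | alloc Γ a hv' ha =>
    obtain ⟨hba, -⟩ := Heap.look_upd_eq_none_iff.mp hb
    rw [Γ.upd_comm hba.symm]
    exact .alloc _ a hv' ((Heap.look_upd_of_ne hba.symm).trans ha)
  | letE _ _ _ _ _ _ _ _ _ _ _ h₂ ih₁ ih₂ =>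
    exact .letE _ _ _ _ _ _ _ _ _ _ (ih₁ (h₂.look_eq_none hb)) (ih₂ hb)
  | caseL | caseR | splitE | app | spend =>
    rename_i ih
    constructor
    exact ih hb
  | call _ _ _ _ _ _ _ _ hF _ ih => exact .call _ _ _ _ _ _ _ _ hF (ih hb)
  | unfoldE _ _ _ ha => exact .unfoldE _ _ _ (Heap.look_upd_eq_some_of_look_eq_none hb ha)
  | force Γ Δ a F u k w ha _ ih =>
    obtain ⟨hba, hΔ⟩ := Heap.look_upd_eq_none_iff.mp hb
    rw [Δ.upd_comm hba.symm]
    refine .force _ _ a F u k w ((Heap.look_upd_of_ne hba.symm).trans ha) ?_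
    rw [Γ.upd_erase_comm hba]
    exact ih hΔ
  -- The case `recall`, whose name is a Mathlib keyword and cannot be written here.
  | _ _ _ _ ha => exact RBig.recall _ _ _ (Heap.look_upd_eq_some_of_look_eq_none hb ha)
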